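/- Fix n ≥ 1 and x_1 < x_2 < x_3 with 1 ≤ x_1 < x_2 < x_3 ≤ n+1. Then the number of permutations σ ∈ S_{n+1} with DT(σ) = {x_1, x_2, x_3} equals 4^{x_1 − 1}·3^{x_2 − x_1}·2^{x_3 − x_2} − (3^{x_1 − 1}·2^{x_2 − x_1} + 3^{x_2 − 1}·2^{x_3 − x_2} + 3^{x_1 − 1}·2^{x_3 − x_1}) + (2^{x_1 − 1} + 2^{x_2 − 1} + 2^{x_3 − 1}) − 1. -/

import Mathlib

/-!
The number of `σ` with `DT σ ⊆ S` factors. Deleting the smallest value from `σ ∈ S_{n+1}` (and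
lowering the others by one) leaves some `τ ∈ S_n`; conversely the smallest value may be inserted
into `τ` at the front, where it creates no descent, or right after an entry `v`, which then becomes
a descent top while nothing else changes. So, once `DT τ` is contained in the shifted set, the
number of admissible insertion places is one plus the number of elements of `S` above the smallest
value (`good_ins`, `count_succ`). Iterating, the number of `σ` with `DT σ ⊆ S` is
`∏_k (1 + #{s ∈ S : s > k})` (`count_eq`), which for `S = {x₁, x₂, x₃}` is
`4^(x₁-1) * 3^(x₂-x₁) * 2^(x₃-x₂)`, and similarly for the subsets of `S`. The claim follows by
inclusion-exclusion over the eight subsets of `{x₁, x₂, x₃}`.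
-/

/-- The descent top set of a permutation `σ` of `{0,…,n-1}`, recorded with one-based values:
`DT(σ) = {σ(i) : σ(i) > σ(i+1)} ⊆ {1,…,n}` (values shifted by `+1` to be one-based). -/
def DT {n : ℕ} (σ : Equiv.Perm (Fin n)) : Finset ℕ :=
  Finset.image (fun i => (σ i : ℕ) + 1)
    (Finset.univ.filter fun i : Fin n => ∃ j : Fin n, (j : ℕ) = (i : ℕ) + 1 ∧ σ j < σ i)

/-- Every descent top of `σ`, as a zero-based value, satisfies `P`. -/
def Good {n : ℕ} (P : ℕ → Prop) (σ : Equiv.Perm (Fin n)) : Prop :=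
  ∀ i j : Fin n, (j : ℕ) = i + 1 → σ j < σ i → P (σ i)

/-- The permutation obtained from `τ` by raising all values by one and inserting the value `0`
at position `p`. -/
def ins {n : ℕ} (p : Fin (n + 1)) (τ : Equiv.Perm (Fin n)) : Equiv.Perm (Fin (n + 1)) :=
  ((finSuccEquiv' p).trans (Equiv.optionCongr τ)).trans (finSuccEquiv' 0).symm

lemma ins_self {n : ℕ} (p : Fin (n + 1)) (τ : Equiv.Perm (Fin n)) : ins p τ p = 0 := by
  simp [ins]

lemma ins_succAbove {n : ℕ} (p : Fin (n + 1)) (τ : Equiv.Perm (Fin n)) (i : Fin n) :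
    ins p τ (p.succAbove i) = (τ i).succ := by
  simp [ins]

lemma ins_bijective (n : ℕ) :
    Function.Bijective
      (fun x : Fin (n + 1) × Equiv.Perm (Fin n) => ins x.1 x.2) := by
  rw [Fintype.bijective_iff_injective_and_card]
  constructor
  · rintro ⟨p, τ⟩ ⟨q, ρ⟩ h
    simp only at h
    have hpq : p = q := by
      apply (ins p τ).injective
      rw [ins_self, h, ins_self]
    subst hpq
    refine Prod.ext rfl (Equiv.ext fun i => ?_)
    have := ins_succAbove p τ i
    rw [h, ins_succAbove] at this
    exact (Fin.succ_injective _ this).symm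
  · simp [Fintype.card_perm, Nat.factorial_succ]

/-- Inserting the smallest value makes the entry before it a descent top and affects no other
descent top. -/
lemma good_ins {n : ℕ} (P : ℕ → Prop) (p : Fin (n + 1)) (τ : Equiv.Perm (Fin n)) :
    Good P (ins p τ) ↔
      Good (fun v => P (v + 1)) τ ∧ ∀ i : Fin n, (p : ℕ) = i + 1 → P (τ i + 1) := by
  have val : ∀ i : Fin n, ((p.succAbove i : Fin (n + 1)) : ℕ) = if (i : ℕ) < p then (i : ℕ)
      else i + 1 := by
    intro i
    simp only [Fin.succAbove, Fin.lt_def, Fin.val_castSucc]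
    split_ifs <;> simp
  constructor
  · intro h
    have key : ∀ i : Fin n, (p : ℕ) = i + 1 → P (τ i + 1) := by
      intro i hi
      have := h (p.succAbove i) p (by rw [val]; split_ifs <;> omega)
        (by rw [ins_self, ins_succAbove]; exact Fin.succ_pos _)
      rwa [ins_succAbove, Fin.val_succ] at this
    refine ⟨fun i j hij hlt => ?_, key⟩
    by_cases hp : (p : ℕ) = i + 1
    · exact key i hp
    · have := h (p.succAbove i) (p.succAbove j)
        (by rw [val, val]; split_ifs <;> omega)
        (by rw [ins_succAbove, ins_succAbove]; exact Fin.succ_lt_succ_iff.2 hlt)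
      rwa [ins_succAbove, Fin.val_succ] at this
  · rintro ⟨hτ, hp⟩ i j hij hlt
    rcases Fin.eq_self_or_eq_succAbove p i with rfl | ⟨i, rfl⟩
    · rw [ins_self] at hlt
      exact absurd hlt (Fin.not_lt_zero _)
    rw [ins_succAbove, Fin.val_succ]
    rcases Fin.eq_self_or_eq_succAbove p j with rfl | ⟨j, rfl⟩
    · apply hp
      rw [val] at hij
      split_ifs at hij <;> omega
    · rw [ins_succAbove, ins_succAbove, Fin.succ_lt_succ_iff] at hlt
      refine hτ i j ?_ hlt
      rw [val, val] at hij
      split_ifs at hij <;> omega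

open Classical in
/-- The number of permutations of `Fin n` all of whose descent tops satisfy `P`. -/
noncomputable def count (n : ℕ) (P : ℕ → Prop) : ℕ :=
  (Finset.univ.filter fun σ : Equiv.Perm (Fin n) => Good P σ).card

open Classical in
/-- Classify permutations by the position of the value `0`: either the front, or after an entry
whose raised value `v + 1` satisfies `P`. The number of such positions does not depend on `τ`. -/
lemma count_succ (n : ℕ) (P : ℕ → Prop) :
    count (n + 1) P =
      count n (fun v => P (v + 1)) * (1 + ∑ v ∈ Finset.range n, if P (v + 1) then 1 else 0) := by
  have places : ∀ τ : Equiv.Perm (Fin n),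
      (∑ p : Fin (n + 1), if ∀ i : Fin n, (p : ℕ) = i + 1 → P (τ i + 1) then 1 else 0)
        = 1 + ∑ v ∈ Finset.range n, if P (v + 1) then 1 else 0 := by
    intro τ
    rw [Fin.sum_univ_succ]
    congr 1
    · simp
    · rw [← Fin.sum_univ_eq_sum_range (fun v => if P (v + 1) then 1 else 0) n,
        ← Equiv.sum_comp τ (fun i : Fin n => if P (i + 1) then 1 else 0)]
      refine Finset.sum_congr rfl fun i _ => ?_
      congr 1
      apply propext
      constructor
      · intro h
        exact h i (by simp)
      · intro h j hj
        have : j = i := by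
          apply Fin.ext
          simp at hj
          omega
        exact this ▸ h
  unfold count
  simp only [Finset.card_filter]
  rw [← (ins_bijective n).sum_comp (fun σ => if Good P σ then 1 else 0), Fintype.sum_prod_type,
    Finset.sum_comm, Finset.sum_mul]
  refine Finset.sum_congr rfl fun τ _ => ?_
  simp only [good_ins]
  by_cases h : Good (fun v => P (v + 1)) τ
  · simp only [h, true_and, if_true, one_mul]
    exact places τ
  · simp [h]

open Classical in
lemma count_eq (n : ℕ) (P : ℕ → Prop) :
    count n P = ∏ k ∈ Finset.range n,
      (1 + ∑ v ∈ Finset.range n, if k < v ∧ P v then 1 else 0) := by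
  induction n generalizing P with
  | zero =>
    have : ∀ σ : Equiv.Perm (Fin 0), Good P σ := fun σ i => i.elim0
    simp [count, this]
  | succ n ih =>
    rw [count_succ, ih, Finset.prod_range_succ']
    congr 1
    · refine Finset.prod_congr rfl fun k _ => ?_
      rw [Finset.sum_range_succ']
      simp
    · rw [Finset.sum_range_succ']
      simp

/-- The subset of `{a, b, c}` selected by three Booleans, as a predicate on zero-based values. -/
def Sel (a b c : ℕ) (α β γ : Bool) (v : ℕ) : Prop :=
  (v + 1 = a ∧ α = true) ∨ (v + 1 = b ∧ β = true) ∨ (v + 1 = c ∧ γ = true)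

/-- The product of `count_eq` for a subset of `{x₁, x₂, x₃}`, with `p = x₁ - 1`, `q = x₂ - x₁`,
`r = x₃ - x₂`: its factors are constant on the successive blocks of lengths `p`, `q`, `r`, and are
`1` afterwards. -/
lemma count_sel (n p q r : ℕ) (hq : 0 < q) (hr : 0 < r) (hn : p + q + r < n) (α β γ : Bool) :
    count n (Sel (p + 1) (p + 1 + q) (p + 1 + q + r) α β γ) =
      (1 + α.toNat + β.toNat + γ.toNat) ^ p * (1 + β.toNat + γ.toNat) ^ q
        * (1 + γ.toNat) ^ r := by
  classical
  have factor : ∀ k, (1 + ∑ v ∈ Finset.range n,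
      if k < v ∧ Sel (p + 1) (p + 1 + q) (p + 1 + q + r) α β γ v then 1 else 0) =
      1 + ((if k < p then α.toNat else 0) + (if k < p + q then β.toNat else 0)
        + (if k < p + q + r then γ.toNat else 0)) := by
    intro k
    have hpt : ∀ v, (if k < v ∧ Sel (p + 1) (p + 1 + q) (p + 1 + q + r) α β γ v then 1 else 0) =
        (if v = p then (if k < p then α.toNat else 0) else 0)
        + (if v = p + q then (if k < p + q then β.toNat else 0) else 0)
        + (if v = p + q + r then (if k < p + q + r then γ.toNat else 0) else 0) := by
      intro v
      unfold Sel
      have e1 : v + 1 = p + 1 ↔ v = p := by omega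
      have e2 : v + 1 = p + 1 + q ↔ v = p + q := by omega
      have e3 : v + 1 = p + 1 + q + r ↔ v = p + q + r := by omega
      rw [e1, e2, e3]
      by_cases h1 : v = p
      · have h2 : v ≠ p + q := by omega
        have h3 : v ≠ p + q + r := by omega
        simp only [h2, h3, if_false, false_and, or_false]
        subst h1
        cases α <;> simp
      by_cases h2 : v = p + q
      · have h3 : v ≠ p + q + r := by omega
        simp only [h1, h3, if_false, false_and, or_false, false_or]
        subst h2
        cases β <;> simp
      by_cases h3 : v = p + q + r
      · simp only [h1, h2, if_false, false_and, false_or]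
        subst h3
        cases γ <;> simp
      simp [h1, h2, h3]
    simp only [hpt, Finset.sum_add_distrib, Finset.sum_ite_eq', Finset.mem_range]
    rw [if_pos (by omega : p < n), if_pos (by omega : p + q < n), if_pos hn]
  rw [count_eq]
  simp only [factor]
  obtain ⟨s, rfl⟩ : ∃ s, n = p + q + r + s := ⟨n - (p + q + r), by omega⟩
  rw [Finset.prod_range_add, Finset.prod_range_add, Finset.prod_range_add]
  have c1 : ∀ k ∈ Finset.range p, 1 + ((if k < p then α.toNat else 0)
      + (if k < p + q then β.toNat else 0) + (if k < p + q + r then γ.toNat else 0))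
      = 1 + α.toNat + β.toNat + γ.toNat := by
    intro k hk
    rw [Finset.mem_range] at hk
    rw [if_pos hk, if_pos (by omega), if_pos (by omega)]
    ring
  have c2 : ∀ k ∈ Finset.range q, 1 + ((if p + k < p then α.toNat else 0)
      + (if p + k < p + q then β.toNat else 0) + (if p + k < p + q + r then γ.toNat else 0))
      = 1 + β.toNat + γ.toNat := by
    intro k hk
    rw [Finset.mem_range] at hk
    rw [if_neg (by omega), if_pos (by omega), if_pos (by omega)]
    ring
  have c3 : ∀ k ∈ Finset.range r, 1 + ((if p + q + k < p then α.toNat else 0)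
      + (if p + q + k < p + q then β.toNat else 0)
      + (if p + q + k < p + q + r then γ.toNat else 0)) = 1 + γ.toNat := by
    intro k hk
    rw [Finset.mem_range] at hk
    rw [if_neg (by omega), if_neg (by omega), if_pos (by omega)]
    ring
  have c4 : ∀ k ∈ Finset.range s, 1 + ((if p + q + r + k < p then α.toNat else 0)
      + (if p + q + r + k < p + q then β.toNat else 0)
      + (if p + q + r + k < p + q + r then γ.toNat else 0)) = 1 := by
    intro k _
    rw [if_neg (by omega), if_neg (by omega), if_neg (by omega)]
  rw [Finset.prod_congr rfl c1, Finset.prod_congr rfl c2, Finset.prod_congr rfl c3,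
    Finset.prod_congr rfl c4]
  simp

lemma good_iff_DT {n : ℕ} (Q : ℕ → Prop) (σ : Equiv.Perm (Fin n)) :
    Good (fun v => Q (v + 1)) σ ↔ ∀ s ∈ DT σ, Q s := by
  simp only [DT, Finset.mem_image, Finset.mem_filter, Finset.mem_univ, true_and, Good]
  constructor
  · rintro h s ⟨i, ⟨j, hj, hlt⟩, rfl⟩
    exact h i j hj hlt
  · intro h i j hj hlt
    exact h _ ⟨i, ⟨j, hj, hlt⟩, rfl⟩

lemma good_sel_iff {n : ℕ} (a b c : ℕ) (hab : a ≠ b) (hac : a ≠ c) (hbc : b ≠ c)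
    (α β γ : Bool) (σ : Equiv.Perm (Fin n)) :
    Good (Sel a b c α β γ) σ ↔ DT σ ⊆ {a, b, c} ∧ (a ∈ DT σ → α = true) ∧
      (b ∈ DT σ → β = true) ∧ (c ∈ DT σ → γ = true) := by
  have h := good_iff_DT
    (fun s => (s = a ∧ α = true) ∨ (s = b ∧ β = true) ∨ (s = c ∧ γ = true)) σ
  change Good (Sel a b c α β γ) σ ↔ _ at h
  rw [h]
  simp only [Finset.subset_iff, Finset.mem_insert, Finset.mem_singleton]
  constructor
  · intro h
    refine ⟨fun s hs => ?_, fun hs => ?_, fun hs => ?_, fun hs => ?_⟩ <;> have := h _ hs <;> grind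
  · rintro ⟨h0, ha, hb, hc⟩ s hs
    rcases h0 hs with rfl | rfl | rfl <;> grind

/-- Inclusion-exclusion over the eight subsets of `{a, b, c}`. -/
lemma card_DT_eq (n a b c : ℕ) (hab : a ≠ b) (hac : a ≠ c) (hbc : b ≠ c) :
    ((Finset.univ.filter fun σ : Equiv.Perm (Fin n) =>
        DT σ = ({a, b, c} : Finset ℕ)).card : ℤ) =
      count n (Sel a b c true true true)
        - (count n (Sel a b c true true false) + count n (Sel a b c false true true)
          + count n (Sel a b c true false true))
        + (count n (Sel a b c true false false) + count n (Sel a b c false true false)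
          + count n (Sel a b c false false true))
        - count n (Sel a b c false false false) := by
  classical
  have hD : ∀ σ : Equiv.Perm (Fin n), DT σ = ({a, b, c} : Finset ℕ) ↔
      DT σ ⊆ {a, b, c} ∧ a ∈ DT σ ∧ b ∈ DT σ ∧ c ∈ DT σ := by
    intro σ
    constructor
    · intro h
      rw [h]
      simp
    · rintro ⟨h, ha, hb, hc⟩
      refine h.antisymm ?_
      simp [Finset.insert_subset_iff, ha, hb, hc]
  simp only [count, Finset.card_filter, Nat.cast_sum, ← Finset.sum_add_distrib,
    ← Finset.sum_sub_distrib]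
  refine Finset.sum_congr rfl fun σ _ => ?_
  simp only [good_sel_iff a b c hab hac hbc, hD]
  by_cases h0 : DT σ ⊆ {a, b, c} <;> by_cases ha : a ∈ DT σ <;> by_cases hb : b ∈ DT σ <;>
    by_cases hc : c ∈ DT σ <;> simp [h0, ha, hb, hc]

/-- for `n ≥ 1` and `1 ≤ x_1 < x_2 < x_3 ≤ n+1`, the number of permutations
`σ ∈ S_{n+1}` with `DT(σ) = {x_1, x_2, x_3}` equals
`4^{x_1−1}·3^{x_2−x_1}·2^{x_3−x_2} − (3^{x_1−1}·2^{x_2−x_1} + 3^{x_2−1}·2^{x_3−x_2} + 3^{x_1−1}·2^{x_3−x_1}) + (2^{x_1−1} + 2^{x_2−1} + 2^{x_3−1}) − 1`. -/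
theorem stmt8 (n : ℕ) (hn : 1 ≤ n) (x₁ x₂ x₃ : ℕ) (h1 : 1 ≤ x₁) (h12 : x₁ < x₂)
    (h23 : x₂ < x₃) (h3 : x₃ ≤ n + 1) :
    ((Finset.univ.filter fun σ : Equiv.Perm (Fin (n + 1)) =>
        DT σ = ({x₁, x₂, x₃} : Finset ℕ)).card : ℤ)
      = 4 ^ (x₁ - 1) * 3 ^ (x₂ - x₁) * 2 ^ (x₃ - x₂)
        - (3 ^ (x₁ - 1) * 2 ^ (x₂ - x₁) + 3 ^ (x₂ - 1) * 2 ^ (x₃ - x₂)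
            + 3 ^ (x₁ - 1) * 2 ^ (x₃ - x₁))
        + (2 ^ (x₁ - 1) + 2 ^ (x₂ - 1) + 2 ^ (x₃ - 1)) - 1 := by
  rw [card_DT_eq (n + 1) x₁ x₂ x₃ (by omega) (by omega) (by omega)]
  obtain ⟨p, rfl⟩ : ∃ p, x₁ = p + 1 := ⟨x₁ - 1, by omega⟩
  obtain ⟨q, rfl⟩ : ∃ q, x₂ = p + 1 + q := ⟨x₂ - (p + 1), by omega⟩
  obtain ⟨r, rfl⟩ : ∃ r, x₃ = p + 1 + q + r := ⟨x₃ - (p + 1 + q), by omega⟩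
  simp only [count_sel (n + 1) p q r (by omega) (by omega) (by omega)]
  have e1 : p + 1 - 1 = p := by omega
  have e2 : p + 1 + q - (p + 1) = q := by omega
  have e3 : p + 1 + q + r - (p + 1 + q) = r := by omega
  have e4 : p + 1 + q - 1 = p + q := by omega
  have e5 : p + 1 + q + r - (p + 1) = q + r := by omega
  have e6 : p + 1 + q + r - 1 = p + q + r := by omega
  rw [e1, e2, e3, e4, e5, e6]
  simp only [Bool.toNat_true, Bool.toNat_false]
  push_cast
  norm_num [pow_add]
  ring
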